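/- arXiv:2603.04226 — 3 statements merged into one kernel-verified Lean document; each statement's English description precedes it below -/
import Mathlib

section
/- In the even-or-odd MDP(μ), the decision maker has no optimal strategy, but the value equals 1. In terms of reward sets (pure strategies): (a) for every ε > 0 there exists an admissible set W ⊆ ℕ with μ(W) > 1 − ε; (b) for every admissible set W ⊆ ℕ, μ(W) < 1. Hence the supremum of μ(W) over admissible sets W equals 1 and is not attained. -/
/-!
The odd stages carry `μ₀` and the multiples of `2 ^ m` carry `μ*`, for every `m ≥ 1`.

*Value one.* Let `W` consist of `E m` together with the odd numbers whose successor is not in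
`E m`. It contains every `E n` with `n ≥ m`, so `μ* W = 1`; by translation invariance the odd
numbers it omits have `φ`-mass `φ (E m) = 2 ^ (-m)`, so `μ W = 1 - 2 ^ (-m)`.

*No optimum.* Both `μ₀ W` and `μ* W` are at most `1`, so `μ W ≥ 1` forces `μ₀ W = 1`, i.e. the odd
numbers outside `W` are `φ`-null. For admissible `W` their translate by one is `W ∩ E 1`, which
contains every `W ∩ E n` with `n ≥ 1`; hence `μ* W = 0`, a contradiction.
-/

open Filter Topology

/-- A charge (finitely additive probability measure) on ℕ. -/
def IsCharge (μ : Set ℕ → ℝ) : Prop :=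
  μ ∅ = 0 ∧ μ Set.univ = 1 ∧ (∀ M : Set ℕ, 0 ≤ μ M) ∧
    ∀ M₁ M₂ : Set ℕ, Disjoint M₁ M₂ → μ (M₁ ∪ M₂) = μ M₁ + μ M₂

/-- A diffuse charge: every singleton has measure zero. -/
def IsDiffuse (μ : Set ℕ → ℝ) : Prop :=
  IsCharge μ ∧ ∀ n : ℕ, μ {n} = 0

/-- Translation invariance: `μ(M) = μ(M + 1)` where `M + 1 = {n + 1 : n ∈ M}`. -/
def IsTransInv (μ : Set ℕ → ℝ) : Prop :=
  ∀ M : Set ℕ, μ M = μ ((· + 1) '' M)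

/-- `E 0` is the set of odd numbers `{1,3,5,...}`; for `n ≥ 1`,
`E n = {k · 2ⁿ : k ≥ 1}`. -/
def E : ℕ → Set ℕ
  | 0 => {m | Odd m}
  | n + 1 => {m | ∃ k : ℕ, 1 ≤ k ∧ m = k * 2 ^ (n + 1)}

/-- `μ₀(W) = 2 · φ(W ∩ E₀)`. -/
noncomputable def mu0 (φ : Set ℕ → ℝ) (W : Set ℕ) : ℝ := 2 * φ (W ∩ E 0)

/-- `μₙ(W) = 2ⁿ · φ(W ∩ Eₙ)`. -/
noncomputable def muN (φ : Set ℕ → ℝ) (n : ℕ) (W : Set ℕ) : ℝ := 2 ^ n * φ (W ∩ E n)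

/-- A set of stages is admissible if for every `k ≥ 1` exactly one of `2k - 1`
and `2k` belongs to it. -/
def Admissible (W : Set ℕ) : Prop :=
  ∀ k : ℕ, 1 ≤ k → Xor' (2 * k - 1 ∈ W) (2 * k ∈ W)

lemma IsCharge.mono {φ : Set ℕ → ℝ} (h : IsCharge φ) {A B : Set ℕ} (hAB : A ⊆ B) :
    φ A ≤ φ B := by
  have h1 := h.2.2.2 A (B \ A) Set.disjoint_sdiff_right
  rw [Set.union_sdiff_cancel hAB] at h1
  linarith [h.2.2.1 (B \ A)]

lemma E_antitone {m n : ℕ} (hm : 1 ≤ m) (hmn : m ≤ n) : E n ⊆ E m := by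
  obtain ⟨m, rfl⟩ := Nat.exists_eq_add_of_le' hm
  obtain ⟨d, rfl⟩ := Nat.exists_eq_add_of_le hmn
  obtain ⟨r, hr⟩ : ∃ r, m + 1 + d = r + 1 := ⟨m + d, by omega⟩
  rw [hr]
  rintro x ⟨k, hk, rfl⟩
  refine ⟨k * 2 ^ d, Nat.mul_pos hk (by positivity), ?_⟩
  rw [← hr]
  ring

lemma mem_E_one {x : ℕ} : x ∈ E 1 ↔ ∃ k, 1 ≤ k ∧ x = 2 * k := by
  change (∃ k : ℕ, 1 ≤ k ∧ x = k * 2 ^ (0 + 1)) ↔ _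
  simp [mul_comm]

/-- A cluster point of `(μₙ)` inherits, set by set, every closed condition which eventually holds
along the sequence. -/
lemma clusterPt_mem {φ μstar : Set ℕ → ℝ}
    (h : MapClusterPt μstar atTop (fun n => muN φ (n + 1))) {W : Set ℕ} {C : Set ℝ}
    (hC : IsClosed C) (hW : ∀ᶠ n in atTop, muN φ (n + 1) W ∈ C) : μstar W ∈ C := by
  have hcl : IsClosed {ν : Set ℕ → ℝ | ν W ∈ C} := hC.preimage (continuous_apply W)
  have h2 : ClusterPt μstar (𝓟 {ν : Set ℕ → ℝ | ν W ∈ C}) :=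
    ClusterPt.mono h (by simpa [Filter.le_principal_iff] using hW)
  exact hcl.closure_subset (mem_closure_iff_clusterPt.2 h2)

lemma muN_of_subset {φ : Set ℕ → ℝ} (hφEn : ∀ n : ℕ, 1 ≤ n → φ (E n) = (1 / 2 : ℝ) ^ n)
    {n : ℕ} (hn : 1 ≤ n) {W : Set ℕ} (h : E n ⊆ W) : muN φ n W = 1 := by
  rw [muN, Set.inter_eq_right.2 h, hφEn n hn, ← mul_pow]
  norm_num

lemma muN_le_one {φ : Set ℕ → ℝ} (hφ : IsCharge φ)
    (hφEn : ∀ n : ℕ, 1 ≤ n → φ (E n) = (1 / 2 : ℝ) ^ n)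
    {n : ℕ} (hn : 1 ≤ n) (W : Set ℕ) : muN φ n W ≤ 1 := by
  rw [← muN_of_subset hφEn hn (Set.Subset.refl _), muN, muN, Set.inter_self]
  exact mul_le_mul_of_nonneg_left (hφ.mono Set.inter_subset_right) (by positivity)

/-- The admissible set containing `E m` and every odd number not forced out by `E m`. -/
def nearOptimal (m : ℕ) : Set ℕ := E m ∪ {j | Odd j ∧ j + 1 ∉ E m}

lemma admissible_nearOptimal {m : ℕ} (hm : 1 ≤ m) : Admissible (nearOptimal m) := by
  intro k hk
  have hodd : 2 * k - 1 ∉ E m := fun h => by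
    obtain ⟨l, _, hl⟩ := mem_E_one.1 (E_antitone le_rfl hm h)
    omega
  have h1 : Odd (2 * k - 1) := ⟨k - 1, by omega⟩
  have h2 : ¬ Odd (2 * k) := by simp
  have h3 : 2 * k - 1 + 1 = 2 * k := by omega
  simp only [nearOptimal, Set.mem_union, Set.mem_ofPred_eq, hodd, h1, h2, h3]
  tauto

lemma mu0_nearOptimal {φ : Set ℕ → ℝ} (hφ : IsCharge φ) (hφt : IsTransInv φ)
    (hφE0 : φ (E 0) = 1 / 2) (hφEn : ∀ n : ℕ, 1 ≤ n → φ (E n) = (1 / 2 : ℝ) ^ n)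
    {m : ℕ} (hm : 1 ≤ m) : mu0 φ (nearOptimal m) = 1 - 2 * (1 / 2 : ℝ) ^ m := by
  have heven : ∀ x ∈ E m, ∃ k, 1 ≤ k ∧ x = 2 * k := fun x hx =>
    mem_E_one.1 (E_antitone le_rfl hm hx)
  have hshift : (· + 1) '' {j | j + 1 ∈ E m} = E m := by
    ext x
    constructor
    · rintro ⟨j, hj, rfl⟩
      exact hj
    · intro hx
      obtain ⟨k, hk, rfl⟩ := heven x hx
      have h3 : 2 * k - 1 + 1 = 2 * k := by omega
      exact ⟨2 * k - 1, by simpa [h3] using hx, h3⟩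
  have hsplit : (nearOptimal m ∩ E 0) ∪ {j | j + 1 ∈ E m} = E 0 := by
    ext x
    change ((x ∈ E m ∨ (Odd x ∧ x + 1 ∉ E m)) ∧ Odd x) ∨ x + 1 ∈ E m ↔ Odd x
    have : x + 1 ∈ E m → Odd x := fun h => by
      obtain ⟨k, hk, hx⟩ := heven _ h
      exact ⟨k - 1, by omega⟩
    tauto
  have hdisj : Disjoint (nearOptimal m ∩ E 0) {j | j + 1 ∈ E m} := by
    rw [Set.disjoint_left]
    rintro x ⟨hx | hx, hodd⟩ h
    · obtain ⟨k, hk, rfl⟩ := heven _ hx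
      exact absurd hodd (by simp [E])
    · exact hx.2 h
  have hadd := hφ.2.2.2 _ _ hdisj
  rw [hsplit, hφt {j | j + 1 ∈ E m}, hshift, hφE0, hφEn m hm] at hadd
  rw [mu0]
  linarith

/-- If an admissible set carries the full mass of the odd numbers, it misses the even numbers up to
a null set. -/
lemma null_even_of_admissible {φ : Set ℕ → ℝ} (hφ : IsCharge φ) (hφt : IsTransInv φ)
    (hφE0 : φ (E 0) = 1 / 2) {W : Set ℕ} (hW : Admissible W) (h : 1 ≤ mu0 φ W) :
    φ (W ∩ E 1) = 0 := by
  have hshift : (· + 1) '' (E 0 \ W) = W ∩ E 1 := by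
    ext x
    rw [Set.mem_inter_iff, mem_E_one]
    constructor
    · rintro ⟨j, ⟨⟨l, rfl⟩, hj⟩, rfl⟩
      have hx := hW (l + 1) (by omega)
      rw [show 2 * (l + 1) - 1 = 2 * l + 1 by omega] at hx
      exact ⟨(Xor.or hx).resolve_left hj, l + 1, by omega, by ring⟩
    · rintro ⟨hx, k, hk, rfl⟩
      refine ⟨2 * k - 1, ⟨⟨k - 1, by omega⟩, fun h' => ?_⟩, by simp only; omega⟩
      rcases hW k hk with h | h
      · exact h.2 hx
      · exact h.2 h'
  have hadd := hφ.2.2.2 (W ∩ E 0) (E 0 \ W)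
    (Set.disjoint_left.2 fun x hx hx' => hx'.2 hx.1)
  rw [Set.inter_comm, Set.inter_union_sdiff, hφE0, hφt (E 0 \ W), hshift, Set.inter_comm] at hadd
  rw [mu0] at h
  linarith [hφ.2.2.1 (W ∩ E 1)]

theorem stmt_0
    (φ : Set ℕ → ℝ) (hφ : IsCharge φ) (hφd : ∀ n : ℕ, φ {n} = 0)
    (hφt : IsTransInv φ)
    (hφE0 : φ (E 0) = 1 / 2)
    (hφEn : ∀ n : ℕ, 1 ≤ n → φ (E n) = (1 / 2 : ℝ) ^ n)
    (μstar : Set ℕ → ℝ)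
    (hμstar : MapClusterPt μstar atTop (fun n => muN φ (n + 1)))
    (μ : Set ℕ → ℝ)
    (hμ : ∀ W : Set ℕ, μ W = (1 / 2) * mu0 φ W + (1 / 2) * μstar W) :
    (∀ ε : ℝ, 0 < ε → ∃ W : Set ℕ, Admissible W ∧ 1 - ε < μ W) ∧
    (∀ W : Set ℕ, Admissible W → μ W < 1) ∧
    IsLUB {x : ℝ | ∃ W : Set ℕ, Admissible W ∧ μ W = x} 1 ∧
    (1 : ℝ) ∉ {x : ℝ | ∃ W : Set ℕ, Admissible W ∧ μ W = x} := by
  have ha : ∀ ε : ℝ, 0 < ε → ∃ W : Set ℕ, Admissible W ∧ 1 - ε < μ W := by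
    intro ε hε
    obtain ⟨m, hm⟩ := exists_pow_lt_of_lt_one hε (by norm_num : (1 / 2 : ℝ) < 1)
    refine ⟨nearOptimal (m + 1), admissible_nearOptimal (by omega), ?_⟩
    have hstar : μstar (nearOptimal (m + 1)) ∈ ({1} : Set ℝ) := by
      refine clusterPt_mem hμstar isClosed_singleton ?_
      filter_upwards [eventually_ge_atTop m] with n hn
      exact muN_of_subset hφEn (by omega)
        ((E_antitone (by omega) (by omega)).trans Set.subset_union_left)
    rw [Set.mem_singleton_iff] at hstar
    rw [hμ, hstar, mu0_nearOptimal hφ hφt hφE0 hφEn (by omega), pow_succ]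
    have : (0 : ℝ) < (1 / 2) ^ m := by positivity
    linarith
  have hb : ∀ W : Set ℕ, Admissible W → μ W < 1 := by
    intro W hW
    by_contra! hge
    rw [hμ] at hge
    have h0 : mu0 φ W ≤ 1 := by
      have := hφ.mono (Set.inter_subset_right : W ∩ E 0 ⊆ E 0)
      rw [mu0]
      linarith
    have hs : μstar W ∈ Set.Iic (1 : ℝ) :=
      clusterPt_mem hμstar isClosed_Iic
        (Eventually.of_forall fun n => muN_le_one hφ hφEn (by omega) W)
    rw [Set.mem_Iic] at hs
    have hnull := null_even_of_admissible hφ hφt hφE0 hW (by linarith)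
    have hz : μstar W ∈ ({0} : Set ℝ) := by
      refine clusterPt_mem hμstar isClosed_singleton (Eventually.of_forall fun n => ?_)
      have h1 : φ (W ∩ E (n + 1)) ≤ φ (W ∩ E 1) :=
        hφ.mono (Set.inter_subset_inter_right _ (E_antitone le_rfl (by omega)))
      have h2 : φ (W ∩ E (n + 1)) = 0 := le_antisymm (hnull ▸ h1) (hφ.2.2.1 _)
      simp [muN, h2]
    rw [Set.mem_singleton_iff] at hz
    linarith
  refine ⟨ha, hb, ⟨?_, ?_⟩, ?_⟩
  · rintro x ⟨W, hW, rfl⟩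
    exact (hb W hW).le
  · intro b hub
    refine le_of_forall_pos_sub_le fun ε hε => ?_
    obtain ⟨W, hW, h⟩ := ha ε hε
    exact h.le.trans (hub ⟨W, hW, rfl⟩)
  · rintro ⟨W, hW, h⟩
    exact (hb W hW).ne h
end

section
/- Let φ be a translation-invariant charge on ℕ with φ(E₀) = 1/2, let n ≥ 1, and let W ⊆ ℕ be a set such that for every k ∈ ℕ it is not the case that both 2k−1 ∈ W and 2k ∈ W. If φ(W ∩ Eₙ) > 0, then φ(W ∩ E₀) < 1/2. -/
/-!
Each element of `W ∩ E n` is some `2j` with `j ≥ 1`, and then `2j - 1` is odd and not in `W`.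
Hence the shift of `W ∩ E n` down by one lies in `E 0 \ W`, and by translation invariance it has
the same positive charge. So `φ (W ∩ E 0) = φ (E 0) - φ (E 0 \ W)` is strictly below `1 / 2`.
-/

open Filter Topology

theorem stmt_4
    (φ : Set ℕ → ℝ) (hφ : IsCharge φ) (hφt : IsTransInv φ)
    (hφE0 : φ (E 0) = 1 / 2)
    (n : ℕ) (hn : 1 ≤ n) (W : Set ℕ)
    (hW : ∀ k : ℕ, 1 ≤ k → ¬(2 * k - 1 ∈ W ∧ 2 * k ∈ W))
    (hpos : 0 < φ (W ∩ E n)) :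
    φ (W ∩ E 0) < 1 / 2 := by
  obtain ⟨-, -, hnonneg, hadd⟩ := hφ
  -- Elements of `E n` are positive and even, since `n ≥ 1`.
  have hE : ∀ m ∈ E n, ∃ j, 1 ≤ j ∧ m = 2 * j := by
    obtain ⟨p, rfl⟩ : ∃ p, n = p + 1 := ⟨n - 1, by omega⟩
    rintro m ⟨k, hk, rfl⟩
    exact ⟨k * 2 ^ p, Nat.mul_pos hk (by positivity), by ring⟩
  set S : Set ℕ := {m | m + 1 ∈ W ∩ E n} with hS
  have hSimg : (· + 1) '' S = W ∩ E n := by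
    ext m
    constructor
    · rintro ⟨a, ha, rfl⟩
      exact ha
    · intro hm
      obtain ⟨j, hj, hmj⟩ := hE m hm.2
      have hm1 : m - 1 + 1 = m := by omega
      refine ⟨m - 1, ?_, hm1⟩
      change m - 1 + 1 ∈ W ∩ E n
      rwa [hm1]
  have hSodd : S ⊆ E 0 \ W := by
    intro m hm
    obtain ⟨j, hj, hmj⟩ := hE _ hm.2
    refine ⟨⟨j - 1, by omega⟩, fun hmW => hW j hj ⟨?_, hmj ▸ hm.1⟩⟩
    rwa [show 2 * j - 1 = m by omega]
  have h1 : φ (W ∩ E 0) + φ (E 0 \ W) = φ (E 0) := by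
    rw [← hadd _ _ (Set.disjoint_left.2 fun x hx hx' => hx'.2 hx.1),
      Set.inter_comm, Set.inter_union_diff]
  have h2 : φ S + φ ((E 0 \ W) \ S) = φ (E 0 \ W) := by
    rw [← hadd _ _ Set.disjoint_sdiff_right, Set.union_diff_cancel hSodd]
  have h3 : φ S = φ (W ∩ E n) := by rw [hφt S, hSimg]
  linarith [hnonneg ((E 0 \ W) \ S)]
end

section
/- There exists a frequency charge on ℕ: a charge μ such that μ(M) = lim_{n→∞} |{1,...,n} ∩ M| / n for every set M ⊆ ℕ for which this limit (the natural density of M) exists. Any such charge is diffuse. -/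
/-!
Fix a free ultrafilter `U` on `ℕ`. The frequencies `|M ∩ {1,...,n}| / n` lie in the compact interval
`[0, 1]`, so they converge along `U`, and `μ M` is defined as that limit. Limits along `U` respect
sums and inequalities, which makes `μ` a charge, and since `U` is finer than `atTop`, the value
`μ M` is the natural density of `M` whenever the latter exists. A frequency charge is diffuse
because singletons have natural density `0`.
-/

open Filter Topology

/-- A frequency charge: a charge that agrees with the natural density
`lim_{n→∞} |{1,...,n} ∩ M| / n` on every set for which this limit exists. -/
def IsFrequencyCharge (μ : Set ℕ → ℝ) : Prop :=
  IsCharge μ ∧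
    ∀ (M : Set ℕ) (d : ℝ),
      Tendsto (fun n : ℕ => ((M ∩ Set.Icc 1 n).ncard : ℝ) / n) atTop (𝓝 d) →
      μ M = d

/-- The frequency `|M ∩ {1,...,n}| / n`; its value at `n = 0` is `0`. -/
noncomputable def freq (M : Set ℕ) (n : ℕ) : ℝ := ((M ∩ Set.Icc 1 n).ncard : ℝ) / n

lemma freq_nonneg (M : Set ℕ) (n : ℕ) : 0 ≤ freq M n := by
  unfold freq; positivity

lemma ncard_Icc_one (n : ℕ) : (Set.Icc 1 n).ncard = n := by
  rw [← Finset.coe_Icc, Set.ncard_coe_finset, Nat.card_Icc, Nat.add_sub_cancel]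

lemma freq_le_one (M : Set ℕ) (n : ℕ) : freq M n ≤ 1 := by
  refine div_le_one_of_le₀ ?_ n.cast_nonneg
  have h := Set.ncard_le_ncard (Set.inter_subset_right (s := M)) (Set.finite_Icc 1 n)
  rw [ncard_Icc_one] at h
  exact_mod_cast h

lemma freq_union {M₁ M₂ : Set ℕ} (h : Disjoint M₁ M₂) (n : ℕ) :
    freq (M₁ ∪ M₂) n = freq M₁ n + freq M₂ n := by
  unfold freq
  rw [Set.union_inter_distrib_right, Set.ncard_union_eq
    (h.mono Set.inter_subset_left Set.inter_subset_left)
    ((Set.finite_Icc 1 n).inter_of_right M₁) ((Set.finite_Icc 1 n).inter_of_right M₂)]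
  push_cast
  ring

lemma tendsto_freq_singleton (k : ℕ) : Tendsto (freq {k}) atTop (𝓝 0) := by
  refine squeeze_zero (freq_nonneg _) (fun n => ?_) tendsto_one_div_atTop_nhds_zero_nat
  have h := Set.ncard_le_ncard (Set.inter_subset_left (s := {k}) (t := Set.Icc 1 n))
  rw [Set.ncard_singleton] at h
  unfold freq
  gcongr
  exact_mod_cast h

lemma tendsto_freq_univ : Tendsto (freq Set.univ) atTop (𝓝 1) := by
  refine tendsto_const_nhds.congr' ?_
  filter_upwards [eventually_gt_atTop 0] with n hn
  have hn' : (n : ℝ) ≠ 0 := by positivity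
  rw [freq, Set.univ_inter, ncard_Icc_one, div_self hn']

lemma exists_tendsto_freq (M : Set ℕ) :
    ∃ x : ℝ, Tendsto (freq M) (hyperfilter ℕ : Filter ℕ) (𝓝 x) := by
  obtain ⟨x, -, hx⟩ := (isCompact_Icc (a := (0 : ℝ)) (b := 1)).ultrafilter_le_nhds
    ((hyperfilter ℕ).map (freq M))
    (le_principal_iff.2 (Filter.mem_map.2 (Filter.univ_mem'
      fun n => ⟨freq_nonneg M n, freq_le_one M n⟩)))
  exact ⟨x, hx⟩

theorem stmt_9 :
    (∃ μ : Set ℕ → ℝ, IsFrequencyCharge μ) ∧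
    ∀ μ : Set ℕ → ℝ, IsFrequencyCharge μ → IsDiffuse μ := by
  refine ⟨?_, fun μ hμ => ⟨hμ.1, fun k => hμ.2 {k} 0 (tendsto_freq_singleton k)⟩⟩
  choose μ hμ using exists_tendsto_freq
  have density (M : Set ℕ) (d : ℝ) (h : Tendsto (freq M) atTop (𝓝 d)) : μ M = d :=
    tendsto_nhds_unique (hμ M) (h.mono_left Nat.hyperfilter_le_atTop)
  refine ⟨μ, ⟨density ∅ 0 ?_, density _ 1 tendsto_freq_univ,
    fun M => ge_of_tendsto' (hμ M) (freq_nonneg M), fun M₁ M₂ h => ?_⟩, density⟩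
  · exact tendsto_const_nhds.congr fun n => by simp [freq]
  · exact tendsto_nhds_unique (hμ _)
      (((hμ M₁).add (hμ M₂)).congr fun n => (freq_union h n).symm)
end
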